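/- Let q, k be real with 0 < q < 1 and 0 < k < 1, let n ∈ ℕ, and let λ_1, λ_2 ∈ ℂ satisfy Re(λ_2 − λ_1) + n > 0, q^{λ_2−λ_1+1+m} ≠ 1, q^{λ_2−λ_1+k+m} ≠ 1, and q^{λ_1−λ_2+1−k+m} ≠ 1 for all m ∈ ℕ. Let R be real with q^{(1−k)/2} < R < q^{(k−1)/2}. Then (1/(2πi)) ∮_{|y|=R} y^n · [Θ_q(q^{λ_2−λ_1+(k+1)/2}/y) / Θ_q(q^{(1+k)/2}/y)] · [(q^{(1+k)/2}/y ; q)_∞ / (q^{(1−k)/2}/y ; q)_∞] · dy/y = q^{n(1−k)/2} · [Γ_q(1−k) / (Γ_q(λ_2−λ_1+1) Γ_q(λ_1−λ_2+1−k))] · [Γ_q(λ_2−λ_1+k+n) / Γ_q(λ_2−λ_1+k)] · [Γ_q(λ_2−λ_1+1) / Γ_q(λ_2−λ_1+n+1)]. -/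

import Mathlib

/-- `q^x := exp(x·log q)` for real `q > 0` and complex `x`. -/
noncomputable def qpow (q : ℝ) (x : ℂ) : ℂ := Complex.exp (x * Real.log q)

/-- The q-Pochhammer symbol `(z;q)_∞ = ∏_{i=0}^∞ (1 - z qⁱ)`. -/
noncomputable def qPochInf (q : ℝ) (z : ℂ) : ℂ := ∏' i : ℕ, (1 - z * (q : ℂ) ^ i)

/-- `Θ_q(z) = (z;q)_∞ (q z⁻¹;q)_∞ (q;q)_∞`. -/
noncomputable def qTheta (q : ℝ) (z : ℂ) : ℂ :=
  qPochInf q z * qPochInf q ((q : ℂ) * z⁻¹) * qPochInf q (q : ℂ)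

/-- The q-Gamma function `Γ_q(x) = (q;q)_∞ (1-q)^{1-x} / (q^x;q)_∞`. -/
noncomputable def qGamma (q : ℝ) (x : ℂ) : ℂ :=
  qPochInf q (q : ℂ) * (1 - (q : ℂ)) ^ (1 - x) / qPochInf q (qpow q x)

/-!
Ramanujan's `₁ψ₁` summation in disguise. The `n`-th moment of
`Θ_q(u / y) / ((v y; q)_∞ (w / y; q)_∞)` over a circle separating the poles `w qⁱ` from the poles
`v⁻¹ q⁻ⁱ` satisfies a first-order recurrence in `n`, obtained by comparing the integrals over the
circles of radii `R` and `R / |q|` after removing the only pole `v⁻¹` between them. The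
constant of integration is found as `n → ∞`, where the residue at the dominant pole `w` prevails.
Since `Θ_q(q / (v y)) = (q / (v y); q)_∞ (v y; q)_∞ (q; q)_∞`, the integrand in question is such a
kernel with `v = w = q^((1 - k) / 2)`.
-/

open Filter Topology Metric Real

section qPochhammer

variable {q : ℝ}

theorem summable_norm_neg_mul_pow (hq : |q| < 1) (z : ℂ) :
    Summable fun i : ℕ ↦ ‖-(z * (q : ℂ) ^ i)‖ := by
  simpa using (summable_geometric_of_abs_lt_one (by rwa [abs_abs])).mul_left ‖z‖

theorem qPochInf_eq_tprod_one_add (q : ℝ) :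
    qPochInf q = fun z ↦ ∏' i : ℕ, (1 + -(z * (q : ℂ) ^ i)) := by
  simp only [funext_iff, qPochInf, sub_eq_add_neg, implies_true]

theorem hasProd_qPochInf (hq : |q| < 1) (z : ℂ) :
    HasProd (fun i : ℕ ↦ 1 - z * (q : ℂ) ^ i) (qPochInf q z) := by
  simpa only [qPochInf, sub_eq_add_neg] using
    (multipliable_one_add_of_summable (summable_norm_neg_mul_pow hq z)).hasProd

theorem qPochInf_zero (q : ℝ) : qPochInf q 0 = 1 := by simp [qPochInf]

theorem qPochInf_eq_one_sub_mul (hq : |q| < 1) (z : ℂ) :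
    qPochInf q z = (1 - z) * qPochInf q (q * z) := by
  have hshift (i : ℕ) : 1 - q * z * (q : ℂ) ^ i = 1 - z * (q : ℂ) ^ (i + 1) := by ring
  have htail : Multipliable fun i : ℕ ↦ 1 - z * (q : ℂ) ^ (i + 1) := by
    simpa only [hshift] using (hasProd_qPochInf hq (q * z)).multipliable
  simp only [qPochInf, hshift]
  rw [tprod_eq_zero_mul' (f := fun i : ℕ ↦ 1 - z * (q : ℂ) ^ i) htail, pow_zero, mul_one]

theorem qPochInf_ne_zero (hq : |q| < 1) {z : ℂ} (h : ∀ i : ℕ, z * (q : ℂ) ^ i ≠ 1) :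
    qPochInf q z ≠ 0 := by
  rw [qPochInf_eq_tprod_one_add]
  exact tprod_one_add_ne_zero_of_summable
    (fun i hi ↦ h i (by linear_combination -hi)) (summable_norm_neg_mul_pow hq z)

theorem qPochInf_ne_zero_of_norm_lt_one (hq : |q| < 1) {z : ℂ} (hz : ‖z‖ < 1) :
    qPochInf q z ≠ 0 := by
  refine qPochInf_ne_zero hq fun i hi ↦ ?_
  have hlt : ‖z * (q : ℂ) ^ i‖ < 1 := by
    simpa using mul_lt_one_of_nonneg_of_lt_one_left (norm_nonneg z) hz
      (pow_le_one₀ (abs_nonneg q) hq.le)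
  simp [hi] at hlt

theorem qPochInf_self_ne_zero (hq : |q| < 1) : qPochInf q q ≠ 0 :=
  qPochInf_ne_zero_of_norm_lt_one hq (by simpa using hq)

theorem differentiable_qPochInf (hq : |q| < 1) : Differentiable ℂ (qPochInf q) := by
  intro z
  have hbound : Summable fun i : ℕ ↦ (‖z‖ + 1) * |q| ^ i :=
    (summable_geometric_of_abs_lt_one (by rwa [abs_abs])).mul_left _
  have hprod := Summable.hasProdLocallyUniformlyOn_nat_one_add
    (f := fun (i : ℕ) (w : ℂ) ↦ -(w * (q : ℂ) ^ i)) (K := ball 0 (‖z‖ + 1)) isOpen_ball hbound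
    (.of_forall fun i w hw ↦ by
      rw [mem_ball_zero_iff] at hw
      simpa using mul_le_mul_of_nonneg_right hw.le (pow_nonneg (abs_nonneg q) i))
    (fun i ↦ by fun_prop)
  have hdiff := hprod.differentiableOn
    (.of_forall fun t ↦ DifferentiableOn.fun_finsetProd fun _ _ ↦ by fun_prop) isOpen_ball
  rw [qPochInf_eq_tprod_one_add]
  exact hdiff.differentiableAt (isOpen_ball.mem_nhds (by simp))

theorem differentiableAt_qPochInf_comp (hq : |q| < 1) {g : ℂ → ℂ} {z : ℂ}
    (hg : DifferentiableAt ℂ g z) : DifferentiableAt ℂ (fun y ↦ qPochInf q (g y)) z :=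
  (differentiable_qPochInf hq (g z)).comp z hg

theorem tendsto_qPochInf_mul_pow (hq : |q| < 1) (z : ℂ) :
    Tendsto (fun m : ℕ ↦ qPochInf q (z * (q : ℂ) ^ m)) atTop (𝓝 1) := by
  have hpow : Tendsto (fun m : ℕ ↦ z * (q : ℂ) ^ m) atTop (𝓝 0) := by
    simpa using (tendsto_pow_atTop_nhds_zero_of_norm_lt_one (by simpa using hq)).const_mul z
  have hcont : Tendsto (qPochInf q) (𝓝 0) (𝓝 1) := by
    simpa only [qPochInf_zero] using (differentiable_qPochInf hq).continuous.tendsto 0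
  exact hcont.comp hpow

theorem eq_qPochInf_mul_of_tendsto (hq : |q| < 1) {f : ℕ → ℂ} {z L : ℂ}
    (hf : ∀ m, f m = (1 - z * (q : ℂ) ^ m) * f (m + 1)) (hL : Tendsto f atTop (𝓝 L)) :
    f 0 = qPochInf q z * L := by
  have hprod (N : ℕ) : (∏ m ∈ Finset.range N, (1 - z * (q : ℂ) ^ m)) * f N = f 0 := by
    induction N with
    | zero => simp
    | succ N ih => rw [Finset.prod_range_succ, mul_assoc, ← hf, ih]
  refine tendsto_nhds_unique ?_ ((hasProd_qPochInf hq z).tendsto_prod_nat.mul hL)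
  simp only [hprod, tendsto_const_nhds]

end qPochhammer

section qTheta

variable {q : ℝ}

theorem qTheta_mul_left (hq0 : q ≠ 0) (hq : |q| < 1) {z : ℂ} (hz : z ≠ 0) :
    qTheta q (q * z) = -z⁻¹ * qTheta q z := by
  have hq' : (q : ℂ) ≠ 0 := mod_cast hq0
  have hinv : (q : ℂ) * (q * z)⁻¹ = z⁻¹ := by field_simp
  rw [qTheta, qTheta, hinv, qPochInf_eq_one_sub_mul hq z, qPochInf_eq_one_sub_mul hq z⁻¹]
  field_simp
  ring

theorem differentiableAt_qTheta_div (hq : |q| < 1) (u : ℂ) {y : ℂ} (hy : y ≠ 0) :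
    DifferentiableAt ℂ (fun y ↦ qTheta q (u / y)) y := by
  simp only [qTheta, inv_div, ← mul_div_assoc]
  have hleft : DifferentiableAt ℂ (fun y ↦ u / y) y := by fun_prop (disch := assumption)
  have hright : DifferentiableAt ℂ (fun y ↦ q * y / u) y := by fun_prop
  exact ((differentiableAt_qPochInf_comp hq hleft).mul
    (differentiableAt_qPochInf_comp hq hright)).mul_const _

theorem qTheta_q_div (hq0 : q ≠ 0) (z : ℂ) :
    qTheta q (q / z) = qPochInf q (q / z) * qPochInf q z * qPochInf q q := by
  rw [qTheta, inv_div, mul_div_cancel₀ z (mod_cast hq0 : (q : ℂ) ≠ 0)]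

end qTheta

section CircleAverage

theorem circleAverage_comp_const_mul (f : ℂ → ℂ) (t : ℂ) (r : ℝ) :
    circleAverage (fun z ↦ f (t * z)) 0 r = circleAverage f 0 (‖t‖ * r) := by
  have hmap (θ : ℝ) : circleMap 0 (‖t‖ * r) (θ + t.arg) = t * circleMap 0 r θ := by
    simp only [circleMap_zero, Complex.ofReal_add, Complex.ofReal_mul, add_mul, Complex.exp_add]
    linear_combination r * Complex.exp (θ * Complex.I) * Complex.norm_mul_exp_arg_mul_I t
  rw [circleAverage_eq_integral_add (f := f) t.arg, circleAverage_def]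
  simp only [hmap]

theorem norm_circleAverage_le_of_norm_le_const {f : ℂ → ℂ} {c : ℂ} {R C : ℝ}
    (hf : ∀ z ∈ sphere c |R|, ‖f z‖ ≤ C) : ‖circleAverage f c R‖ ≤ C := by
  have hint := intervalIntegral.norm_integral_le_of_norm_le_const (a := 0) (b := 2 * π)
    fun θ _ ↦ hf _ (circleMap_mem_sphere' c R θ)
  rw [sub_zero, abs_of_pos two_pi_pos] at hint
  rw [circleAverage_def, norm_smul, norm_of_nonneg (by positivity), inv_mul_le_iff₀ two_pi_pos]
  linarith

theorem circleAverage_eq_of_differentiableOn_annulus {f : ℂ → ℂ} {c : ℂ} {r R : ℝ} (hr : 0 < r)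
    (hrR : r ≤ R) (hf : DifferentiableOn ℂ f (closedBall c R \ ball c r)) :
    circleAverage f c R = circleAverage f c r := by
  rw [circleAverage_eq_circleIntegral (hr.trans_le hrR).ne', circleAverage_eq_circleIntegral hr.ne',
    Complex.circleIntegral_sub_center_inv_smul_eq_of_differentiable_on_annulus_off_countable hr hrR
      Set.countable_empty hf.continuousOn]
  rintro z ⟨⟨hzR, hzr⟩, -⟩
  have hmem : ball c R \ closedBall c r ∈ 𝓝 z :=
    (isOpen_ball.sdiff isClosed_closedBall).mem_nhds ⟨hzR, hzr⟩
  exact hf.differentiableAt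
    (mem_of_superset hmem (Set.sdiff_subset_sdiff ball_subset_closedBall ball_subset_closedBall))

theorem circleAverage_div_sub_of_norm_lt {w : ℂ} {R : ℝ} (hw : ‖w‖ < R) :
    circleAverage (fun z ↦ z / (z - w)) 0 R = 1 := by
  have hball : w ∈ ball 0 |R| := by simpa using hw.trans_le (le_abs_self R)
  simpa using (diffContOnCl_const (c := (1 : ℂ))).circleAverage_smul_div hball

theorem circleAverage_div_sub_of_lt_norm {w : ℂ} {s : ℝ} (hs : 0 ≤ s) (hw : s < ‖w‖) :
    circleAverage (fun z ↦ z / (z - w)) 0 s = 0 := by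
  have hdiff : DifferentiableOn ℂ (fun z ↦ z / (z - w)) (closedBall 0 |s|) := by
    intro z hz
    have hne : z - w ≠ 0 := sub_ne_zero.2 <| by
      rintro rfl
      exact hw.not_ge (by simpa [abs_of_nonneg hs] using hz)
    exact DifferentiableAt.differentiableWithinAt (by fun_prop (disch := exact hne))
  simpa using (hdiff.diffContOnCl_ball Set.Subset.rfl).circleAverage

theorem circleAverage_div_sub_mul {h : ℂ → ℂ} {w : ℂ} {r : ℝ} (hr : 0 ≤ r) (hrw : ‖w‖ ≠ r)
    (hh : ContinuousOn h (sphere 0 r)) :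
    circleAverage (fun z ↦ z / (z - w) * h z) 0 r =
      circleAverage (fun z ↦ z * dslope h w z) 0 r +
        h w * circleAverage (fun z ↦ z / (z - w)) 0 r := by
  have hw : w ∉ sphere 0 r := by simpa using hrw
  have hne {z : ℂ} (hz : z ∈ sphere 0 r) : z - w ≠ 0 := sub_ne_zero.2 (ne_of_mem_of_not_mem hz hw)
  have hdslope : ContinuousOn (dslope h w) (sphere 0 r) := fun z hz ↦
    (continuousWithinAt_dslope_of_ne (sub_ne_zero.1 (hne hz))).2 (hh z hz)
  have hquot : ContinuousOn (fun z ↦ z / (z - w)) (sphere 0 r) :=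
    continuousOn_id.div (by fun_prop) fun z hz ↦ hne hz
  rw [← smul_eq_mul (h w), ← circleAverage_fun_smul, ← circleAverage_fun_add
    (f₁ := fun z ↦ z * dslope h w z) ((continuousOn_id.mul hdslope).circleIntegrable hr)
    (hquot.circleIntegrable hr).const_fun_smul]
  refine circleAverage_congr_sphere fun z hz ↦ ?_
  have hz := hne (by rwa [abs_of_nonneg hr] at hz)
  have hslope : (z - w) * dslope h w z = h z - h w := sub_smul_dslope h w z
  simp only [smul_eq_mul]
  field_simp
  linear_combination -z * hslope

theorem circleAverage_div_sub_mul_eq_add_of_annulus {h : ℂ → ℂ} {w : ℂ} {s R : ℝ} (hs : 0 < s)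
    (hsw : s < ‖w‖) (hwR : ‖w‖ < R) (hh : DifferentiableOn ℂ h (closedBall 0 R \ ball 0 s)) :
    circleAverage (fun z ↦ z / (z - w) * h z) 0 R =
      h w + circleAverage (fun z ↦ z / (z - w) * h z) 0 s := by
  have hsR : s ≤ R := (hsw.trans hwR).le
  have hsphere {r : ℝ} (hsr : s ≤ r) (hrR : r ≤ R) :
      sphere (0 : ℂ) r ⊆ closedBall 0 R \ ball 0 s := fun z hz ↦ by
    rw [mem_sphere_zero_iff_norm] at hz
    simp [hz, hsr, hrR]
  have hnhds : closedBall (0 : ℂ) R \ ball 0 s ∈ 𝓝 w := by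
    refine mem_of_superset ((isOpen_ball.sdiff isClosed_closedBall).mem_nhds (?_ : w ∈ _))
      (Set.sdiff_subset_sdiff ball_subset_closedBall ball_subset_closedBall)
    simpa using ⟨hwR, hsw⟩
  have hdslope : circleAverage (fun z ↦ z * dslope h w z) 0 R =
      circleAverage (fun z ↦ z * dslope h w z) 0 s :=
    circleAverage_eq_of_differentiableOn_annulus hs hsR
      (differentiableOn_id.mul ((Complex.differentiableOn_dslope hnhds).2 hh))
  rw [circleAverage_div_sub_mul (hs.le.trans hsR) hwR.ne
      (hh.continuousOn.mono (hsphere hsR le_rfl)),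
    circleAverage_div_sub_mul hs.le hsw.ne' (hh.continuousOn.mono (hsphere le_rfl hsR)), hdslope,
    circleAverage_div_sub_of_norm_lt hwR, circleAverage_div_sub_of_lt_norm hs.le hsw]
  ring

theorem tendsto_circleAverage_mul_pow_div_pow {f : ℂ → ℂ} {w : ℂ} {s : ℝ} (hs : 0 ≤ s)
    (hsw : s < ‖w‖) (hf : ContinuousOn f (sphere 0 s)) :
    Tendsto (fun m : ℕ ↦ circleAverage (fun z ↦ f z * z ^ m) 0 s / w ^ m) atTop (𝓝 0) := by
  obtain ⟨C, hC⟩ := (isCompact_sphere (0 : ℂ) s).exists_bound_of_continuousOn hf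
  have hgeom : Tendsto (fun m : ℕ ↦ C * (s / ‖w‖) ^ m) atTop (𝓝 0) := by
    simpa using (tendsto_pow_atTop_nhds_zero_of_lt_one (by positivity)
      ((div_lt_one (hs.trans_lt hsw)).2 hsw)).const_mul C
  refine squeeze_zero_norm (fun m ↦ ?_) hgeom
  rw [norm_div, norm_pow, div_pow, ← mul_div_assoc]
  gcongr
  refine norm_circleAverage_le_of_norm_le_const fun z hz ↦ ?_
  rw [abs_of_nonneg hs] at hz
  rw [norm_mul, norm_pow, mem_sphere_zero_iff_norm.1 hz]
  exact mul_le_mul_of_nonneg_right (hC z hz) (by positivity)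

theorem tendsto_circleAverage_div_sub_mul_pow {g : ℂ → ℂ} {w : ℂ} {s R : ℝ} (hs : 0 < s)
    (hsw : s < ‖w‖) (hwR : ‖w‖ < R) (hg : DifferentiableOn ℂ g (closedBall 0 R \ ball 0 s)) :
    Tendsto (fun m : ℕ ↦ circleAverage (fun z ↦ z / (z - w) * (g z * z ^ m)) 0 R / w ^ m) atTop
      (𝓝 (g w)) := by
  have hw : w ≠ 0 := norm_pos_iff.1 (hs.trans hsw)
  have hcont : ContinuousOn (fun z ↦ z / (z - w) * g z) (sphere 0 s) := by
    refine (continuousOn_id.div (by fun_prop) fun z hz ↦ sub_ne_zero.2 ?_).mul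
      (hg.continuousOn.mono fun z hz ↦ ?_)
    · rintro rfl
      exact hsw.ne' (by simpa using hz)
    · rw [mem_sphere_zero_iff_norm] at hz
      simp [hz, (hsw.trans hwR).le]
  have hlim := (tendsto_circleAverage_mul_pow_div_pow hs.le hsw hcont).const_add (g w)
  rw [add_zero] at hlim
  refine hlim.congr fun m ↦ ?_
  rw [circleAverage_div_sub_mul_eq_add_of_annulus hs hsw hwR (hg.fun_mul (by fun_prop)), add_div,
    mul_div_cancel_right₀ _ (pow_ne_zero m hw)]
  simp only [mul_assoc]

end CircleAverage

section RamanujanKernel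

/-- The product side of Ramanujan's `₁ψ₁` summation, as a function of `y` with poles at `w qⁱ` and
`v⁻¹ q⁻ⁱ` for `i : ℕ`. -/
noncomputable def ramanujanKernel (q : ℝ) (u v w y : ℂ) : ℂ :=
  qTheta q (u / y) / (qPochInf q (v * y) * qPochInf q (w / y))

variable {q R : ℝ} {u v w y : ℂ}

theorem differentiableAt_ramanujanKernel (hq : |q| < 1) (u : ℂ) (hw : ‖w‖ < ‖y‖)
    (hv : ‖v‖ * ‖y‖ < 1) : DifferentiableAt ℂ (ramanujanKernel q u v w) y := by
  have hy : y ≠ 0 := norm_pos_iff.1 ((norm_nonneg w).trans_lt hw)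
  have hquot : DifferentiableAt ℂ (fun y ↦ w / y) y := by fun_prop (disch := assumption)
  refine (differentiableAt_qTheta_div hq u hy).div
    ((differentiableAt_qPochInf_comp hq (by fun_prop)).mul
      (differentiableAt_qPochInf_comp hq hquot)) (mul_ne_zero ?_ ?_) <;>
    refine qPochInf_ne_zero_of_norm_lt_one hq ?_
  · rwa [norm_mul]
  · rwa [norm_div, div_lt_one (norm_pos_iff.2 hy)]

theorem ramanujanKernel_mul_left_q (hq : |q| < 1) (u w : ℂ) (hvy : v * y ≠ 1) :
    ramanujanKernel q u (q * v) w y = (1 - v * y) * ramanujanKernel q u v w y := by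
  have hne : 1 - v * y ≠ 0 := sub_ne_zero.2 hvy.symm
  rw [ramanujanKernel, ramanujanKernel, qPochInf_eq_one_sub_mul hq (v * y), mul_assoc (q : ℂ),
    mul_assoc (1 - v * y), ← mul_div_assoc, mul_div_mul_left _ _ hne]

theorem mul_ramanujanKernel_mul_right_q (hq : |q| < 1) (u v : ℂ) (hy : y ≠ 0) (hyw : y ≠ w) :
    y * ramanujanKernel q u v (q * w) y = (y - w) * ramanujanKernel q u v w y := by
  have hne : y - w ≠ 0 := sub_ne_zero.2 hyw
  have hfactor : 1 - w / y = (y - w) / y := by field_simp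
  rw [ramanujanKernel, ramanujanKernel, qPochInf_eq_one_sub_mul hq (w / y), mul_div_assoc (q : ℂ),
    hfactor]
  field_simp

theorem ramanujanKernel_inv_q_mul (hq0 : q ≠ 0) (hq : |q| < 1) (hu : u ≠ 0) (v w : ℂ)
    (hy : y ≠ 0) :
    ramanujanKernel q u (q * v) w ((q : ℂ)⁻¹ * y) =
      -(y / u) * ramanujanKernel q u v (q * w) y := by
  have hq' : (q : ℂ) ≠ 0 := mod_cast hq0
  have hscale (z : ℂ) : z / ((q : ℂ)⁻¹ * y) = q * (z / y) := by field_simp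
  have hv : q * v * ((q : ℂ)⁻¹ * y) = v * y := by field_simp
  rw [ramanujanKernel, ramanujanKernel, hv, hscale, hscale,
    qTheta_mul_left hq0 hq (div_ne_zero hu hy), inv_div, mul_div_assoc (q : ℂ) w y, mul_div_assoc]

/-- The `n`-th moment of the Ramanujan kernel over the circle of radius `R`, that is, the
coefficient of `y⁻ⁿ` in its Laurent expansion. -/
noncomputable def ramanujanMoment (q : ℝ) (u v w : ℂ) (R : ℝ) (n : ℤ) : ℂ :=
  circleAverage (fun y ↦ y ^ n * ramanujanKernel q u v w y) 0 R

theorem circleIntegrable_zpow_mul_ramanujanKernel (hq : |q| < 1) (u : ℂ) (hw : ‖w‖ < R)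
    (hv : ‖v‖ * R < 1) (n : ℤ) :
    CircleIntegrable (fun y ↦ y ^ n * ramanujanKernel q u v w y) 0 R := by
  have hR : 0 < R := (norm_nonneg w).trans_lt hw
  refine ContinuousOn.circleIntegrable hR.le fun y hy ↦ ContinuousAt.continuousWithinAt ?_
  have hy := mem_sphere_zero_iff_norm.1 hy
  exact (continuousAt_zpow₀ y n (.inl (norm_pos_iff.1 (hy ▸ hR)))).mul
    (differentiableAt_ramanujanKernel hq u (hy ▸ hw) (hy ▸ hv)).continuousAt

theorem circleAverage_zpow_mul_ramanujanKernel_inv_q_mul (hq0 : q ≠ 0) (hq : |q| < 1) (u : ℂ)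
    (hw : ‖w‖ < R) (hv : ‖v‖ * R < 1) (n : ℤ) :
    circleAverage
        (fun y ↦ ((q : ℂ)⁻¹ * y) ^ n * ramanujanKernel q u (q * v) w ((q : ℂ)⁻¹ * y)) 0 R =
      ramanujanMoment q u (q * v) w R n := by
  have hR : 0 < R := (norm_nonneg w).trans_lt hw
  have habs : 0 < |q| := abs_pos.2 hq0
  rw [circleAverage_comp_const_mul (fun y ↦ y ^ n * ramanujanKernel q u (q * v) w y)]
  refine circleAverage_eq_of_differentiableOn_annulus hR ?_ fun y hy ↦ ?_
  · simpa using le_mul_of_one_le_left hR.le ((one_le_inv₀ habs).2 hq.le)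
  obtain ⟨hyle, hRy⟩ : |q| * ‖y‖ ≤ R ∧ R ≤ ‖y‖ := by
    simpa [inv_mul_eq_div, le_div_iff₀' habs] using hy
  have hvy : ‖(q : ℂ) * v‖ * ‖y‖ < 1 := calc
    ‖(q : ℂ) * v‖ * ‖y‖ = ‖v‖ * (|q| * ‖y‖) := by simp; ring
    _ ≤ ‖v‖ * R := by gcongr
    _ < 1 := hv
  exact ((differentiableAt_zpow.2 (.inl (norm_pos_iff.1 (hR.trans_le hRy)))).mul
    (differentiableAt_ramanujanKernel hq u (hw.trans_le hRy) hvy)).differentiableWithinAt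

theorem circleAverage_zpow_mul_linear_mul_ramanujanKernel (hq : |q| < 1) (u : ℂ) (hw : ‖w‖ < R)
    (hv : ‖v‖ * R < 1) (n : ℤ) (a b : ℂ) :
    circleAverage (fun y ↦ y ^ n * ((a + b * y) * ramanujanKernel q u v w y)) 0 R =
      a * ramanujanMoment q u v w R n + b * ramanujanMoment q u v w R (n + 1) := by
  have hR : 0 < R := (norm_nonneg w).trans_lt hw
  have hint := circleIntegrable_zpow_mul_ramanujanKernel hq u hw hv
  rw [ramanujanMoment, ramanujanMoment, ← smul_eq_mul a, ← smul_eq_mul b, ← circleAverage_fun_smul,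
    ← circleAverage_fun_smul, ← circleAverage_fun_add (hint n).const_fun_smul
      (hint (n + 1)).const_fun_smul]
  refine circleAverage_congr_sphere fun y hy ↦ ?_
  simp only [zpow_add_one₀ (ne_of_mem_sphere hy (abs_pos.2 hR.ne').ne'), smul_eq_mul]
  ring

theorem ramanujanMoment_mul_left_q (hq : |q| < 1) (u : ℂ) (hw : ‖w‖ < R) (hv : ‖v‖ * R < 1)
    (n : ℤ) :
    ramanujanMoment q u (q * v) w R n =
      ramanujanMoment q u v w R n - v * ramanujanMoment q u v w R (n + 1) := by
  have hR : 0 < R := (norm_nonneg w).trans_lt hw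
  have hlin := circleAverage_zpow_mul_linear_mul_ramanujanKernel hq u hw hv n 1 (-v)
  simp only [one_mul, neg_mul, ← sub_eq_add_neg] at hlin
  rw [← hlin, ramanujanMoment]
  refine circleAverage_congr_sphere fun y hy ↦ ?_
  rw [abs_of_pos hR, mem_sphere_zero_iff_norm] at hy
  have hvy : v * y ≠ 1 := fun h ↦ hv.ne (by rw [← hy, ← norm_mul, h, norm_one])
  simp only [ramanujanKernel_mul_left_q hq u w hvy]

theorem neg_mul_zpow_mul_ramanujanMoment_mul_left_q (hq0 : q ≠ 0) (hq : |q| < 1) (hu : u ≠ 0)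
    (hw : ‖w‖ < R) (hv : ‖v‖ * R < 1) (n : ℤ) :
    -(u * (q : ℂ) ^ n) * ramanujanMoment q u (q * v) w R n =
      ramanujanMoment q u v w R (n + 1) - w * ramanujanMoment q u v w R n := by
  have hR : 0 < R := (norm_nonneg w).trans_lt hw
  have hlin := circleAverage_zpow_mul_linear_mul_ramanujanKernel hq u hw hv n (-w) 1
  rw [one_mul, neg_mul, neg_add_eq_sub] at hlin
  rw [← hlin, ← circleAverage_zpow_mul_ramanujanKernel_inv_q_mul hq0 hq u hw hv, ← smul_eq_mul,
    ← circleAverage_fun_smul]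
  refine circleAverage_congr_sphere fun y hy ↦ ?_
  have hy0 : y ≠ 0 := ne_of_mem_sphere hy (abs_pos.2 hR.ne').ne'
  rw [abs_of_pos hR, mem_sphere_zero_iff_norm] at hy
  have hyw : y ≠ w := by rintro rfl; exact hw.ne hy
  have hshift := mul_ramanujanKernel_mul_right_q hq u v hy0 hyw
  have hqn : (q : ℂ) ^ n ≠ 0 := zpow_ne_zero n (mod_cast hq0)
  simp only [ramanujanKernel_inv_q_mul hq0 hq hu v w hy0, mul_zpow, inv_zpow, smul_eq_mul]
  field_simp
  linear_combination hshift

theorem ramanujanMoment_succ_mul (hq0 : q ≠ 0) (hq : |q| < 1) (hu : u ≠ 0) (hw : ‖w‖ < R)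
    (hv : ‖v‖ * R < 1) (n : ℤ) :
    ramanujanMoment q u v w R (n + 1) * (1 - u * v * (q : ℂ) ^ n) =
      ramanujanMoment q u v w R n * (w - u * (q : ℂ) ^ n) := by
  have hunshifted := ramanujanMoment_mul_left_q hq u hw hv n
  have hshifted := neg_mul_zpow_mul_ramanujanMoment_mul_left_q hq0 hq hu hw hv n
  linear_combination -hshifted - u * (q : ℂ) ^ n * hunshifted

theorem tendsto_ramanujanMoment_div_pow (hq : |q| < 1) (u : ℂ) (hw0 : w ≠ 0)
    (hw : ‖w‖ < R) (hv : ‖v‖ * R < 1) (n : ℤ) :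
    Tendsto (fun m : ℕ ↦ ramanujanMoment q u v w R (n + m) / w ^ m) atTop
      (𝓝 (w ^ n * ramanujanKernel q u v (q * w) w)) := by
  have hR : 0 < R := (norm_nonneg w).trans_lt hw
  have hqw : ‖(q : ℂ) * w‖ < ‖w‖ := by
    simpa using mul_lt_of_lt_one_left (norm_pos_iff.2 hw0) hq
  obtain ⟨s, hqs, hsw⟩ := exists_between hqw
  have hs : 0 < s := (norm_nonneg _).trans_lt hqs
  have hdiff : DifferentiableOn ℂ (fun y ↦ y ^ n * ramanujanKernel q u v (q * w) y)
      (closedBall 0 R \ ball 0 s) := fun y hy ↦ by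
    obtain ⟨hyR, hsy⟩ : ‖y‖ ≤ R ∧ s ≤ ‖y‖ := by simpa using hy
    have hvy : ‖v‖ * ‖y‖ < 1 := (mul_le_mul_of_nonneg_left hyR (norm_nonneg v)).trans_lt hv
    exact ((differentiableAt_zpow.2 (.inl (norm_pos_iff.1 (hs.trans_le hsy)))).mul
      (differentiableAt_ramanujanKernel hq u (hqs.trans_le hsy) hvy)).differentiableWithinAt
  refine (tendsto_circleAverage_div_sub_mul_pow hs hsw hw hdiff).congr fun m ↦ ?_
  congr 1
  refine circleAverage_congr_sphere fun y hy ↦ ?_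
  have hy0 : y ≠ 0 := ne_of_mem_sphere hy (abs_pos.2 hR.ne').ne'
  rw [abs_of_pos hR, mem_sphere_zero_iff_norm] at hy
  have hyw : y ≠ w := by rintro rfl; exact hw.ne hy
  have hne : y - w ≠ 0 := sub_ne_zero.2 hyw
  have hshift := mul_ramanujanKernel_mul_right_q hq u v hy0 hyw
  rw [div_mul_eq_mul_div, div_eq_iff hne, zpow_add₀ hy0, zpow_natCast]
  linear_combination y ^ n * y ^ m * hshift

theorem ramanujanKernel_mul_right_q_self (hq : |q| < 1) (u v : ℂ) (hw0 : w ≠ 0) :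
    ramanujanKernel q u v (q * w) w =
      qPochInf q (u / w) * qPochInf q (q * (w / u)) / qPochInf q (v * w) := by
  rw [ramanujanKernel, qTheta, mul_div_cancel_right₀ _ hw0,
    mul_div_mul_right _ _ (qPochInf_self_ne_zero hq), inv_div]

theorem ramanujanMoment_mul_qPochInf (hq0 : q ≠ 0) (hq : |q| < 1) (hu : u ≠ 0) (hw0 : w ≠ 0)
    (hw : ‖w‖ < R) (hv : ‖v‖ * R < 1) (n : ℤ) :
    ramanujanMoment q u v w R n * qPochInf q (u * (q : ℂ) ^ n / w) =
      w ^ n * qPochInf q (u * v * (q : ℂ) ^ n) * ramanujanKernel q u v (q * w) w := by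
  have hq' : (q : ℂ) ≠ 0 := mod_cast hq0
  have hpow (m : ℕ) : (q : ℂ) ^ (n + m) = (q : ℂ) ^ n * (q : ℂ) ^ m := by
    rw [zpow_add₀ hq', zpow_natCast]
  have hrec (m : ℕ) :
      ramanujanMoment q u v w R (n + m) / w ^ m *
          qPochInf q (u * (q : ℂ) ^ n / w * (q : ℂ) ^ m) =
        (1 - u * v * (q : ℂ) ^ n * (q : ℂ) ^ m) *
          (ramanujanMoment q u v w R (n + (m + 1 : ℕ)) / w ^ (m + 1) *
            qPochInf q (u * (q : ℂ) ^ n / w * (q : ℂ) ^ (m + 1))) := by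
    have hsucc := ramanujanMoment_succ_mul hq0 hq hu hw hv (n + m)
    have hshift : q * (u * (q : ℂ) ^ n / w * (q : ℂ) ^ m) =
        u * (q : ℂ) ^ n / w * (q : ℂ) ^ (m + 1) := by ring
    rw [hpow] at hsucc
    rw [qPochInf_eq_one_sub_mul hq, hshift, Nat.cast_succ, ← add_assoc]
    field_simp
    linear_combination
      -w ^ (m + 1) * qPochInf q (u * (q : ℂ) ^ n * (q : ℂ) ^ (m + 1) / w) * hsucc
  have hlim := (tendsto_ramanujanMoment_div_pow hq u hw0 hw hv n).mul
    (tendsto_qPochInf_mul_pow hq (u * (q : ℂ) ^ n / w))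
  have hzero := eq_qPochInf_mul_of_tendsto hq hrec hlim
  simp only [Nat.cast_zero, add_zero, pow_zero, div_one, mul_one] at hzero
  rw [hzero]
  ring

theorem subsingleton_sphere_inter_qPochInf_div_eq_zero (hq0 : q ≠ 0) (hq : |q| < 1) (c : ℂ) :
    (sphere 0 R ∩ {y : ℂ | qPochInf q (c / y) = 0}).Subsingleton := by
  have hzero {y : ℂ} (hy : qPochInf q (c / y) = 0) : ∃ i : ℕ, c ≠ 0 ∧ y = c * (q : ℂ) ^ i := by
    by_contra! hne
    refine qPochInf_ne_zero hq (fun i hi ↦ ?_) hy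
    have hc : c ≠ 0 := by rintro rfl; simp at hi
    have hy0 : y ≠ 0 := by rintro rfl; simp at hi
    rw [div_mul_eq_mul_div, div_eq_one_iff_eq hy0] at hi
    exact hne i hc hi.symm
  rintro y ⟨hyR, hy⟩ z ⟨hzR, hz⟩
  obtain ⟨i, hc, rfl⟩ := hzero hy
  obtain ⟨j, -, rfl⟩ := hzero hz
  have hnorm : ‖c‖ * |q| ^ i = ‖c‖ * |q| ^ j := by simp_all
  rw [pow_right_injective₀ (abs_pos.2 hq0) hq.ne (mul_left_cancel₀ (norm_ne_zero_iff.2 hc) hnorm)]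

theorem circleIntegral_qTheta_div_eq_ramanujanMoment_div (hq0 : q ≠ 0) (hq : |q| < 1)
    (u v w : ℂ) (hR : R ≠ 0) (n : ℤ) :
    (1 / (2 * (π : ℂ) * Complex.I)) *
        (∮ y in C(0, R), y ^ n * (qTheta q (u / y) / qTheta q (q / v / y)) *
          (qPochInf q (q / v / y) / qPochInf q (w / y)) / y) =
      ramanujanMoment q u v w R n / qPochInf q q := by
  let f (y : ℂ) : ℂ := y ^ n * (qTheta q (u / y) / qTheta q (q / v / y)) *
    (qPochInf q (q / v / y) / qPochInf q (w / y))
  have hae : f =ᶠ[codiscreteWithin (sphere 0 |R|)]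
      fun y ↦ (qPochInf q q)⁻¹ • (y ^ n * ramanujanKernel q u v w y) := by
    -- At the zeros of `(q / (v y); q)_∞` the integrand is a junk `0 / 0`.
    have hfinite :=
      (subsingleton_sphere_inter_qPochInf_div_eq_zero (R := |R|) hq0 hq (q / v)).finite
    filter_upwards [compl_finite_mem_codiscreteWithin hfinite, self_mem_codiscreteWithin _]
      with y hzero hy
    have hne : qPochInf q (q / v / y) ≠ 0 := fun h ↦ hzero ⟨hy, h⟩
    rw [div_div] at hne
    simp only [f, div_div, qTheta_q_div hq0, ramanujanKernel, smul_eq_mul]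
    generalize qPochInf q (q / (v * y)) = c at hne ⊢
    field_simp
  have haverage : (1 / (2 * (π : ℂ) * Complex.I)) * ∮ y in C(0, R), f y / y =
      circleAverage f 0 R := by
    simp only [circleAverage_eq_circleIntegral hR, sub_zero, smul_eq_mul, one_div, inv_mul_eq_div]
  rw [haverage, circleAverage_congr_codiscreteWithin hae hR, circleAverage_fun_smul,
    ramanujanMoment, smul_eq_mul, inv_mul_eq_div]

theorem circleIntegral_qTheta_div_eq (hq0 : q ≠ 0) (hq : |q| < 1) (hu : u ≠ 0) (hw0 : w ≠ 0)
    (hw : ‖w‖ < R) (hv : ‖v‖ * R < 1) (n : ℤ)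
    (hne : qPochInf q (u * (q : ℂ) ^ n / w) ≠ 0) :
    (1 / (2 * (π : ℂ) * Complex.I)) *
        (∮ y in C(0, R), y ^ n * (qTheta q (u / y) / qTheta q (q / v / y)) *
          (qPochInf q (q / v / y) / qPochInf q (w / y)) / y) =
      w ^ n * (qPochInf q (u / w) * qPochInf q (q * (w / u)) *
        qPochInf q (u * v * (q : ℂ) ^ n) /
          (qPochInf q q * qPochInf q (v * w) * qPochInf q (u * (q : ℂ) ^ n / w))) := by
  have hmoment := ramanujanMoment_mul_qPochInf hq0 hq hu hw0 hw hv n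
  rw [ramanujanKernel_mul_right_q_self hq u v hw0, ← eq_div_iff hne] at hmoment
  rw [circleIntegral_qTheta_div_eq_ramanujanMoment_div hq0 hq u v w
    ((norm_nonneg w).trans_lt hw).ne', hmoment]
  ring

end RamanujanKernel

section qGamma

variable {q : ℝ}

theorem qpow_add (q : ℝ) (x y : ℂ) : qpow q (x + y) = qpow q x * qpow q y := by
  rw [qpow, add_mul, Complex.exp_add, qpow, qpow]

theorem qpow_neg (q : ℝ) (x : ℂ) : qpow q (-x) = (qpow q x)⁻¹ := by
  rw [qpow, neg_mul, Complex.exp_neg, qpow]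

theorem qpow_sub (q : ℝ) (x y : ℂ) : qpow q (x - y) = qpow q x / qpow q y := by
  rw [sub_eq_add_neg, qpow_add, qpow_neg, div_eq_mul_inv]

theorem qpow_ne_zero (q : ℝ) (x : ℂ) : qpow q x ≠ 0 := Complex.exp_ne_zero _

theorem qpow_one (hq0 : 0 < q) : qpow q 1 = q := by
  rw [qpow, one_mul, ← Complex.ofReal_exp, exp_log hq0]

theorem qpow_int_mul (q : ℝ) (n : ℤ) (x : ℂ) : qpow q (n * x) = qpow q x ^ n := by
  rw [qpow, qpow, mul_assoc, Complex.exp_int_mul]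

theorem qpow_intCast (hq0 : 0 < q) (n : ℤ) : qpow q n = (q : ℂ) ^ n := by
  simpa only [mul_one, qpow_one hq0] using qpow_int_mul q n 1

theorem norm_qpow (hq0 : 0 < q) (x : ℂ) : ‖qpow q x‖ = q ^ x.re := by
  rw [qpow, Complex.norm_exp, Complex.re_mul_ofReal, rpow_def_of_pos hq0, mul_comm]

theorem qPochInf_qpow_ne_zero (hq0 : 0 < q) (hq1 : q < 1) {x : ℂ}
    (h : ∀ m : ℕ, qpow q (x + m) ≠ 1) : qPochInf q (qpow q x) ≠ 0 :=
  qPochInf_ne_zero (abs_lt.2 ⟨by linarith, hq1⟩) fun m ↦ by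
    simpa only [qpow_add, ← Int.cast_natCast (R := ℂ), qpow_intCast hq0, zpow_natCast] using h m

theorem qGamma_ne_zero (hq0 : 0 < q) (hq1 : q < 1) {x : ℂ} (h : ∀ m : ℕ, qpow q (x + m) ≠ 1) :
    qGamma q x ≠ 0 := by
  have hbase : (1 - q : ℂ) ≠ 0 := by exact_mod_cast (sub_pos.2 hq1).ne'
  have hself : qPochInf q q ≠ 0 := qPochInf_self_ne_zero (abs_lt.2 ⟨by linarith, hq1⟩)
  exact div_ne_zero (mul_ne_zero hself (Complex.cpow_ne_zero_iff.2 (.inl hbase)))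
    (qPochInf_qpow_ne_zero hq0 hq1 h)

theorem qGamma_div_qGamma (hq : |q| < 1) (x y : ℂ) :
    qGamma q x / qGamma q y =
      (1 - q : ℂ) ^ (y - x) * (qPochInf q (qpow q y) / qPochInf q (qpow q x)) := by
  have hbase : (1 - q : ℂ) ≠ 0 := by exact_mod_cast (sub_pos.2 (abs_lt.1 hq).2).ne'
  have hself : qPochInf q q ≠ 0 := qPochInf_self_ne_zero hq
  have hexp : y - x = (1 - x) - (1 - y) := by ring
  rw [qGamma, qGamma, hexp, Complex.cpow_sub (1 - x) (1 - y) hbase, div_div_div_comm,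
    mul_div_mul_left _ _ hself, div_eq_mul_inv _ (_ / _), inv_div]

theorem qGamma_one (hq0 : 0 < q) (hq1 : q < 1) : qGamma q 1 = 1 := by
  rw [qGamma, sub_self, Complex.cpow_zero, mul_one, qpow_one hq0,
    div_self (qPochInf_self_ne_zero (abs_lt.2 ⟨by linarith, hq1⟩))]

theorem qGamma_ratio_eq (hq0 : 0 < q) (hq1 : q < 1) (k s ν : ℂ) (hs : qGamma q (s + 1) ≠ 0) :
    qGamma q (1 - k) / (qGamma q (s + 1) * qGamma q (1 - k - s)) *
        (qGamma q (s + k + ν) / qGamma q (s + k)) * (qGamma q (s + 1) / qGamma q (s + ν + 1)) =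
      qPochInf q (qpow q (s + k)) * qPochInf q (qpow q (1 - k - s)) *
        qPochInf q (qpow q (s + ν + 1)) /
          (qPochInf q q * qPochInf q (qpow q (1 - k)) * qPochInf q (qpow q (s + k + ν))) := by
  have hq : |q| < 1 := abs_lt.2 ⟨by linarith, hq1⟩
  have hbase : (1 - q : ℂ) ≠ 0 := by exact_mod_cast (sub_pos.2 hq1).ne'
  have hexp : 1 - k - s - (1 - k) + (s + k - (s + k + ν)) + (s + ν + 1 - 1) = 0 := by ring
  have hpow : (1 - q : ℂ) ^ (1 - k - s - (1 - k)) * (1 - q : ℂ) ^ (s + k - (s + k + ν)) *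
      (1 - q : ℂ) ^ (s + ν + 1 - 1) = 1 := by
    rw [← Complex.cpow_add _ _ hbase, ← Complex.cpow_add _ _ hbase, hexp, Complex.cpow_zero]
  calc _ = qGamma q (1 - k) / qGamma q (1 - k - s) * (qGamma q (s + k + ν) / qGamma q (s + k)) *
        (qGamma q 1 / qGamma q (s + ν + 1)) := by
        rw [qGamma_one hq0 hq1]
        field_simp
    _ = _ := by
        simp only [qGamma_div_qGamma hq, qpow_one hq0]
        linear_combination (qPochInf q (qpow q (s + k)) * qPochInf q (qpow q (1 - k - s)) *
          qPochInf q (qpow q (s + ν + 1)) / (qPochInf q q * qPochInf q (qpow q (1 - k)) *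
            qPochInf q (qpow q (s + k + ν)))) * hpow

end qGamma

section ContourIntegral

variable {q R : ℝ}

theorem norm_qpow_lt_and_mul_lt_one (hq0 : 0 < q) {k : ℂ} (hR1 : q ^ ((1 - k.re) / 2) < R)
    (hR2 : R < q ^ ((k.re - 1) / 2)) :
    ‖qpow q ((1 - k) / 2)‖ < R ∧ ‖qpow q ((1 - k) / 2)‖ * R < 1 := by
  have hnorm : ‖qpow q ((1 - k) / 2)‖ = q ^ ((1 - k.re) / 2) := by simp [norm_qpow hq0]
  rw [hnorm]
  refine ⟨hR1, ?_⟩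
  calc q ^ ((1 - k.re) / 2) * R < q ^ ((1 - k.re) / 2) * q ^ ((k.re - 1) / 2) := by gcongr
    _ = 1 := by rw [← rpow_add hq0, ← rpow_zero q]; congr 1; ring

theorem qpow_add_add_ne_one {q : ℝ} {s k : ℂ} (hpos : ∀ m : ℕ, qpow q (s + k + m) ≠ 1)
    (hneg : ∀ m : ℕ, qpow q (1 - k - s + m) ≠ 1) (n : ℤ) : qpow q (s + k + n) ≠ 1 := by
  obtain ⟨m, rfl | rfl⟩ : ∃ m : ℕ, n = m ∨ n = -(m + 1) := by
    rcases n with m | m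
    exacts [⟨m, .inl rfl⟩, ⟨m, .inr (Int.negSucc_eq m)⟩]
  · exact_mod_cast hpos m
  · intro h
    have harg : 1 - k - s + m = -(s + k + (-(m + 1) : ℤ)) := by push_cast; ring
    exact hneg m (by rw [harg, qpow_neg, h, inv_one])

theorem circleIntegral_qTheta_qpow_div_eq (hq0 : 0 < q) (hq1 : q < 1) {k s : ℂ} (n : ℤ)
    (hpos : ∀ m : ℕ, qpow q (s + k + m) ≠ 1) (hneg : ∀ m : ℕ, qpow q (1 - k - s + m) ≠ 1)
    (hR1 : q ^ ((1 - k.re) / 2) < R) (hR2 : R < q ^ ((k.re - 1) / 2)) :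
    (1 / (2 * (π : ℂ) * Complex.I)) *
        (∮ y in C(0, R),
          y ^ n * (qTheta q (qpow q (s + (k + 1) / 2) / y) / qTheta q (qpow q ((1 + k) / 2) / y)) *
            (qPochInf q (qpow q ((1 + k) / 2) / y) / qPochInf q (qpow q ((1 - k) / 2) / y)) / y) =
      qpow q (n * (1 - k) / 2) *
        (qPochInf q (qpow q (s + k)) * qPochInf q (qpow q (1 - k - s)) *
          qPochInf q (qpow q (s + n + 1)) /
            (qPochInf q q * qPochInf q (qpow q (1 - k)) * qPochInf q (qpow q (s + k + n)))) := by
  obtain ⟨hbR, hb⟩ := norm_qpow_lt_and_mul_lt_one hq0 hR1 hR2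
  set b := qpow q ((1 - k) / 2) with hbdef
  set u := qpow q (s + (k + 1) / 2) with hudef
  have hqb : (q : ℂ) / b = qpow q ((1 + k) / 2) := by
    rw [← qpow_one hq0, hbdef, ← qpow_sub]; ring_nf
  have hub : u / b = qpow q (s + k) := by
    rw [hudef, hbdef, ← qpow_sub]; ring_nf
  have hbu : (q : ℂ) * (b / u) = qpow q (1 - k - s) := by
    rw [← qpow_one hq0, hudef, hbdef, ← qpow_sub, ← qpow_add]; ring_nf
  have hbb : b * b = qpow q (1 - k) := by
    rw [hbdef, ← qpow_add]; ring_nf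
  have hbn : b ^ n = qpow q (n * (1 - k) / 2) := by
    rw [mul_div_assoc, qpow_int_mul]
  have hubn : u * b * (q : ℂ) ^ n = qpow q (s + n + 1) := by
    rw [← qpow_intCast hq0, hudef, hbdef, ← qpow_add, ← qpow_add]; ring_nf
  have hubn' : u * (q : ℂ) ^ n / b = qpow q (s + k + n) := by
    rw [← qpow_intCast hq0, hudef, hbdef, ← qpow_add, ← qpow_sub]; ring_nf
  have hne : qPochInf q (u * (q : ℂ) ^ n / b) ≠ 0 := by
    rw [hubn']
    refine qPochInf_qpow_ne_zero hq0 hq1 fun m ↦ ?_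
    simpa [add_assoc] using qpow_add_add_ne_one hpos hneg (n + m)
  have hint := circleIntegral_qTheta_div_eq hq0.ne' (abs_lt.2 ⟨by linarith, hq1⟩) (qpow_ne_zero _ _)
    (qpow_ne_zero _ _) hbR hb n hne
  rwa [hqb, hub, hbu, hbb, hbn, hubn, hubn'] at hint

end ContourIntegral

theorem stmt12_general {q : ℝ} {k lam1 lam2 : ℂ} (hq0 : 0 < q) (hq1 : q < 1) (n : ℤ)
    (hnd1 : ∀ m : ℤ, min 0 n ≤ m → qpow q (lam2 - lam1 + 1 + m) ≠ 1)
    (hnd2 : ∀ m : ℕ, qpow q (lam2 - lam1 + k + m) ≠ 1)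
    (hnd3 : ∀ m : ℕ, qpow q (lam1 - lam2 + 1 - k + m) ≠ 1)
    {R : ℝ} (hR1 : q ^ ((1 - k.re) / 2) < R) (hR2 : R < q ^ ((k.re - 1) / 2)) :
    (1 / (2 * (π : ℂ) * Complex.I)) *
        (∮ y in C(0, R),
          y ^ n *
            (qTheta q (qpow q (lam2 - lam1 + (k + 1) / 2) / y) /
              qTheta q (qpow q ((1 + k) / 2) / y)) *
            (qPochInf q (qpow q ((1 + k) / 2) / y) /
              qPochInf q (qpow q ((1 - k) / 2) / y)) / y) =
      qpow q (n * (1 - k) / 2) *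
        (qGamma q (1 - k) / (qGamma q (lam2 - lam1 + 1) * qGamma q (lam1 - lam2 + 1 - k))) *
        (qGamma q (lam2 - lam1 + k + n) / qGamma q (lam2 - lam1 + k)) *
        (qGamma q (lam2 - lam1 + 1) / qGamma q (lam2 - lam1 + n + 1)) := by
  have hswap : lam1 - lam2 + 1 - k = 1 - k - (lam2 - lam1) := by ring
  have hgamma : qGamma q (lam2 - lam1 + 1) ≠ 0 := qGamma_ne_zero hq0 hq1 fun m ↦ by
    exact_mod_cast hnd1 m (min_le_of_left_le m.cast_nonneg)
  rw [hswap] at hnd3 ⊢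
  rw [circleIntegral_qTheta_qpow_div_eq hq0 hq1 n hnd2 hnd3 hR1 hR2,
    ← qGamma_ratio_eq hq0 hq1 k _ n hgamma]
  simp only [mul_assoc]

/-- Evaluation of the basic contour integral as a ratio of q-Gamma functions. -/
theorem stmt12 (q k : ℝ) (hq0 : 0 < q) (hq1 : q < 1) (hk0 : 0 < k) (hk1 : k < 1)
    (n : ℕ) (lam1 lam2 : ℂ) (hre : 0 < (lam2 - lam1).re + n)
    (hnd1 : ∀ m : ℕ, qpow q (lam2 - lam1 + 1 + m) ≠ 1)
    (hnd2 : ∀ m : ℕ, qpow q (lam2 - lam1 + k + m) ≠ 1)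
    (hnd3 : ∀ m : ℕ, qpow q (lam1 - lam2 + 1 - k + m) ≠ 1)
    (R : ℝ) (hR1 : q ^ ((1 - k) / 2) < R) (hR2 : R < q ^ ((k - 1) / 2)) :
    (1 / (2 * (Real.pi : ℂ) * Complex.I)) *
        (∮ y in C(0, R),
          y ^ n *
            (qTheta q (qpow q (lam2 - lam1 + (k + 1) / 2) / y) /
              qTheta q (qpow q ((1 + k) / 2) / y)) *
            (qPochInf q (qpow q ((1 + k) / 2) / y) /
              qPochInf q (qpow q ((1 - k) / 2) / y)) / y) =
      qpow q ((n * (1 - k) / 2 : ℝ)) *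
        (qGamma q (1 - k) / (qGamma q (lam2 - lam1 + 1) * qGamma q (lam1 - lam2 + 1 - k))) *
        (qGamma q (lam2 - lam1 + k + n) / qGamma q (lam2 - lam1 + k)) *
        (qGamma q (lam2 - lam1 + 1) / qGamma q (lam2 - lam1 + n + 1)) := by
  simpa using stmt12_general (k := k) hq0 hq1 n (fun m hm ↦ by
    lift m to ℕ using (by simpa using hm)
    exact_mod_cast hnd1 m) hnd2 hnd3 hR1 hR2
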